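/- For any sequence D = (D_n)_{n=1}^∞ of nonempty open subsets of [0,1] forming a base for the topology of [0,1], the space X_D = (C[0,1], ‖·‖_D) is locally octahedral: for every ε > 0 and every x in the unit sphere of X_D there exists y in the unit sphere with ‖x + y‖_D > 2 − ε and ‖x − y‖_D > 2 − ε. -/

import Mathlib

open Set Filter Topology

/-- The `n`-th seminorm: `‖x‖ₙ = sup_{d ∈ Dₙ} |x d|`. -/
noncomputable def seminormD (D : ℕ → Set (Icc (0:ℝ) 1)) (n : ℕ)
    (x : C(Icc (0:ℝ) 1, ℝ)) : ℝ :=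
  ⨆ d : D n, |x d|

/-- The norm `‖x‖_D = (Σₙ 2⁻ⁿ ‖x‖ₙ²)^{1/2}` (indexing the sequence from `0`,
with weight `2^{-(n+1)}`). -/
noncomputable def normD (D : ℕ → Set (Icc (0:ℝ) 1)) (x : C(Icc (0:ℝ) 1, ℝ)) : ℝ :=
  Real.sqrt (∑' n : ℕ, (1 / 2 : ℝ) ^ (n + 1) * (seminormD D n x) ^ 2)

lemma sD_bdd (D : ℕ → Set (Icc (0:ℝ) 1)) (n : ℕ) (x : C(Icc (0:ℝ) 1, ℝ)) :
    BddAbove (Set.range fun d : D n => |x d|) :=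
  ⟨‖x‖, by rintro _ ⟨d, rfl⟩; exact x.norm_coe_le_norm d⟩

lemma sD_nonneg (D : ℕ → Set (Icc (0:ℝ) 1)) (n : ℕ) (x : C(Icc (0:ℝ) 1, ℝ)) :
    0 ≤ seminormD D n x := Real.iSup_nonneg fun _ => abs_nonneg _

lemma sD_le_norm (D : ℕ → Set (Icc (0:ℝ) 1)) (n : ℕ) (x : C(Icc (0:ℝ) 1, ℝ)) :
    seminormD D n x ≤ ‖x‖ :=
  Real.iSup_le (fun d => x.norm_coe_le_norm d) (norm_nonneg _)

lemma le_sD (D : ℕ → Set (Icc (0:ℝ) 1)) (n : ℕ) (x : C(Icc (0:ℝ) 1, ℝ))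
    (p : Icc (0:ℝ) 1) (hp : p ∈ D n) : |x p| ≤ seminormD D n x :=
  le_ciSup (sD_bdd D n x) (⟨p, hp⟩ : D n)

lemma sD_mono (D : ℕ → Set (Icc (0:ℝ) 1)) (n : ℕ) (x y : C(Icc (0:ℝ) 1, ℝ))
    (h : ∀ p, |y p| ≤ |x p|) : seminormD D n y ≤ seminormD D n x :=
  Real.iSup_le (fun d => (h d).trans (le_sD D n x d d.2)) (sD_nonneg D n x)

lemma sD_smul (D : ℕ → Set (Icc (0:ℝ) 1)) (n : ℕ) (x : C(Icc (0:ℝ) 1, ℝ)) (c : ℝ)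
    (hc : 0 ≤ c) : seminormD D n (c • x) = c * seminormD D n x := by
  unfold seminormD
  rw [Real.mul_iSup_of_nonneg hc]
  simp [abs_mul, abs_of_nonneg hc]

lemma sD_summable (D : ℕ → Set (Icc (0:ℝ) 1)) (x : C(Icc (0:ℝ) 1, ℝ)) :
    Summable fun n : ℕ => (1 / 2 : ℝ) ^ (n + 1) * (seminormD D n x) ^ 2 := by
  have h : Summable fun n : ℕ => (1 / 2 : ℝ) ^ (n + 1) * ‖x‖ ^ 2 :=
    ((summable_nat_add_iff 1).2 summable_geometric_two).mul_right _
  refine Summable.of_nonneg_of_le (fun n => by positivity) (fun n => ?_) h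
  have := sD_nonneg D n x
  have := sD_le_norm D n x
  gcongr

lemma normD_smul' (D : ℕ → Set (Icc (0:ℝ) 1)) (x : C(Icc (0:ℝ) 1, ℝ)) (c : ℝ)
    (hc : 0 ≤ c) : normD D (c • x) = c * normD D x := by
  unfold normD
  rw [← Real.sqrt_sq hc, ← Real.sqrt_mul (sq_nonneg c), ← tsum_mul_left, Real.sqrt_sq hc]
  congr 1
  refine tsum_congr fun n => ?_
  rw [sD_smul D n x c hc]; ring

lemma normD_mono (D : ℕ → Set (Icc (0:ℝ) 1)) (x y : C(Icc (0:ℝ) 1, ℝ))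
    (h : ∀ p, |y p| ≤ |x p|) : normD D y ≤ normD D x := by
  refine Real.sqrt_le_sqrt ((sD_summable D y).tsum_le_tsum (fun n => ?_) (sD_summable D x))
  have := sD_nonneg D n y
  have := sD_mono D n x y h
  gcongr

lemma normD_lower (D : ℕ → Set (Icc (0:ℝ) 1)) (x z : C(Icc (0:ℝ) 1, ℝ)) (N : ℕ) (k r : ℝ)
    (hk : 0 ≤ k) (hr : 0 ≤ r)
    (hN : r ^ 2 ≤ ∑ n ∈ Finset.range N, (1 / 2 : ℝ) ^ (n + 1) * (seminormD D n x) ^ 2)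
    (h : ∀ n < N, k * seminormD D n x ≤ seminormD D n z) : k * r ≤ normD D z := by
  refine Real.le_sqrt_of_sq_le ?_
  refine le_trans ?_ ((sD_summable D z).sum_le_tsum (Finset.range N) (fun n _ => by positivity))
  calc (k * r) ^ 2 = k ^ 2 * r ^ 2 := by ring
    _ ≤ k ^ 2 * ∑ n ∈ Finset.range N, (1 / 2 : ℝ) ^ (n + 1) * (seminormD D n x) ^ 2 := by gcongr
    _ = ∑ n ∈ Finset.range N, (1 / 2 : ℝ) ^ (n + 1) * (k * seminormD D n x) ^ 2 := by
        rw [Finset.mul_sum]; exact Finset.sum_congr rfl fun n _ => by ring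
    _ ≤ _ := by
        refine Finset.sum_le_sum fun n hn => ?_
        have h1 := h n (Finset.mem_range.1 hn)
        have := sD_nonneg D n x
        have : 0 ≤ k * seminormD D n x := by positivity
        gcongr

lemma open_infinite (U : Set (Icc (0:ℝ) 1)) (hU : IsOpen U) (hne : U.Nonempty) :
    U.Infinite := by
  obtain ⟨p, hp⟩ := hne
  exact infinite_of_mem_nhds p (hU.mem_nhds hp)

lemma exists_PQ (U : ℕ → Set (Icc (0:ℝ) 1)) (hU : ∀ n, (U n).Infinite) (N : ℕ) :
    ∃ P Q : Set (Icc (0:ℝ) 1), P.Finite ∧ Q.Finite ∧ Disjoint P Q ∧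
      ∀ n < N, (∃ p ∈ P, p ∈ U n) ∧ ∃ q ∈ Q, q ∈ U n := by
  induction N with
  | zero => exact ⟨∅, ∅, by simp⟩
  | succ N ih =>
    obtain ⟨P, Q, hP, hQ, hd, h⟩ := ih
    obtain ⟨p, hp, hp'⟩ := ((hU N).sdiff (hP.union hQ)).nonempty
    obtain ⟨q, hq, hq'⟩ := ((hU N).sdiff ((hP.union hQ).insert p)).nonempty
    simp only [Set.mem_insert_iff, Set.mem_union, not_or] at hp' hq'
    refine ⟨insert p P, insert q Q, hP.insert p, hQ.insert q, ?_, ?_⟩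
    · simp only [Set.disjoint_insert_left, Set.disjoint_insert_right, Set.mem_insert_iff, not_or]
      exact ⟨⟨hq'.1, hq'.2.1⟩, hp'.2, hd⟩
    · intro n hn
      rcases Nat.lt_succ_iff_lt_or_eq.1 hn with hn | rfl
      · obtain ⟨⟨a, ha, ha'⟩, b, hb, hb'⟩ := h n hn
        exact ⟨⟨a, Or.inr ha, ha'⟩, b, Or.inr hb, hb'⟩
      · exact ⟨⟨p, Or.inl rfl, hp⟩, q, Or.inl rfl, hq⟩

/-- For any base `D` of nonempty open sets of `[0,1]`, the space `X_D = (C[0,1], ‖·‖_D)`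
is locally octahedral. -/
theorem normD_locally_octahedral (D : ℕ → Set (Icc (0:ℝ) 1))
    (hDopen : ∀ n, IsOpen (D n)) (hDne : ∀ n, (D n).Nonempty)
    (hbasis : TopologicalSpace.IsTopologicalBasis (Set.range D)) :
    ∀ ε : ℝ, 0 < ε → ∀ x : C(Icc (0:ℝ) 1, ℝ), normD D x = 1 →
      ∃ y : C(Icc (0:ℝ) 1, ℝ), normD D y = 1 ∧
        normD D (x + y) > 2 - ε ∧ normD D (x - y) > 2 - ε := by
  intro ε hε x hx
  obtain ⟨r, hr0, hr1, hrε⟩ : ∃ r : ℝ, 0 < r ∧ r < 1 ∧ 2 - ε < 2 * r * r := by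
    refine ⟨1 - min (ε / 8) (1 / 2), ?_, ?_, ?_⟩
    · linarith [min_le_right (ε / 8) (1 / 2)]
    · have : 0 < min (ε / 8) (1 / 2) := by positivity
      linarith
    · nlinarith [min_le_left (ε / 8) (1 / 2), sq_nonneg (min (ε / 8) (1 / 2))]
  have hsum : ∑' n : ℕ, (1 / 2 : ℝ) ^ (n + 1) * (seminormD D n x) ^ 2 = 1 :=
    Real.sqrt_eq_one.1 hx
  obtain ⟨N, hN⟩ : ∃ N, r ^ 2 <
      ∑ n ∈ Finset.range N, (1 / 2 : ℝ) ^ (n + 1) * (seminormD D n x) ^ 2 := by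
    have h := (sD_summable D x).hasSum.tendsto_sum_nat
    rw [hsum] at h
    exact (h.eventually_const_lt (show r ^ 2 < 1 by nlinarith)).exists
  have hU : ∀ n, {p | p ∈ D n ∧ r * seminormD D n x ≤ |x p|}.Infinite := by
    intro n
    rcases (sD_nonneg D n x).eq_or_lt with h0 | h0
    · refine (open_infinite _ (hDopen n) (hDne n)).mono fun p hp => ⟨hp, ?_⟩
      rw [← h0]; simp
    · have : Nonempty (D n) := (hDne n).to_subtype
      obtain ⟨d, hd⟩ := exists_lt_of_lt_ciSup
        (show r * seminormD D n x < ⨆ d : D n, |x d| by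
          change _ < seminormD D n x; nlinarith)
      have ho : IsOpen {p | r * seminormD D n x < |x p|} :=
        isOpen_lt continuous_const (by fun_prop)
      exact (open_infinite _ ((hDopen n).inter ho) ⟨d, d.2, hd⟩).mono
        fun p hp => ⟨hp.1, le_of_lt hp.2⟩
  obtain ⟨P, Q, hP, hQ, hd, hPQ⟩ := exists_PQ _ hU N
  obtain ⟨f, hf0, hf1, hf⟩ := exists_continuous_zero_one_of_isClosed hP.isClosed hQ.isClosed hd
  set y : C(Icc (0:ℝ) 1, ℝ) := (1 - (2:ℝ) • f) * x with hy
  have hyv : ∀ p, y p = (1 - 2 * f p) * x p := fun p => by simp [hy]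
  have hyP : ∀ p ∈ P, y p = x p := fun p hp => by
    have : f p = 0 := hf0 hp
    rw [hyv, this]; ring
  have hyQ : ∀ p ∈ Q, y p = - x p := fun p hp => by
    have : f p = 1 := hf1 hp
    rw [hyv, this]; ring
  have hle : ∀ p, |y p| ≤ |x p| := fun p => by
    rw [hyv, abs_mul]
    refine mul_le_of_le_one_left (abs_nonneg _) ?_
    have := hf p
    rw [abs_le]; constructor <;> linarith [this.1, this.2]
  have hy1 : normD D y ≤ 1 := hx ▸ normD_mono D x y hle
  have hypos : 0 < normD D y := by
    have : r * r ≤ normD D y := by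
      refine normD_lower D x y N r r hr0.le hr0.le hN.le fun n hn => ?_
      obtain ⟨⟨p, hp, hpD, hpx⟩, -⟩ := hPQ n hn
      have := le_sD D n y p hpD
      rw [hyP p hp] at this
      exact hpx.trans this
    nlinarith
  set c := (normD D y)⁻¹ with hc
  have hc1 : 1 ≤ c := (one_le_inv₀ hypos).2 hy1
  have hc2 : ∀ t : ℝ, 2 * |t| ≤ |t + c * t| := fun t => by
    rw [show t + c * t = (1 + c) * t by ring, abs_mul, abs_of_nonneg (by linarith : 0 ≤ 1 + c)]
    exact mul_le_mul_of_nonneg_right (by linarith) (abs_nonneg _)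
  refine ⟨c • y, ?_, ?_, ?_⟩
  · rw [normD_smul' D y c (by linarith), hc, inv_mul_cancel₀ hypos.ne']
  · refine lt_of_lt_of_le hrε ?_
    refine normD_lower D x _ N (2 * r) r (by linarith) hr0.le hN.le fun n hn => ?_
    obtain ⟨⟨p, hp, hpD, hpx⟩, -⟩ := hPQ n hn
    have h1 := le_sD D n (x + c • y) p hpD
    have h2 : (x + c • y) p = x p + c * x p := by simp [hyP p hp]
    rw [h2] at h1
    linarith [hc2 (x p)]
  · refine lt_of_lt_of_le hrε ?_
    refine normD_lower D x _ N (2 * r) r (by linarith) hr0.le hN.le fun n hn => ?_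
    obtain ⟨-, p, hp, hpD, hpx⟩ := hPQ n hn
    have h1 := le_sD D n (x - c • y) p hpD
    have h2 : (x - c • y) p = x p + c * x p := by simp [hyQ p hp]
    rw [h2] at h1
    linarith [hc2 (x p)]
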